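/- Let G be exponentially distributed with rate 1, and given G = g let ξ have conditional density f(x) = g·exp(-g((x/η)^{b-1} - 1))·(x^{b-2}/η^{b-1})·(b-1)·1[x > η], with η > 0, b > 1. Set M = G + ξ. Then P(M > m) ~ η^{b-1}/m^{b-1} as m → ∞; more precisely P(M>m) = η^{b-1}/m^{b-1} + 2(b-1)η^{2b-2}/m^{2b-1} + 3(b-1)(3b-2)η^{3b-3}/m^{3b-1} + O(m^{-(4b-1)}). -/

import Mathlib

open MeasureTheory ProbabilityTheory Filter Asymptotics Real

/-!
Integrating out `ξ` gives `P(M > m) = ∫₀^∞ exp (-g * (max η (m - g) / η) ^ a) dg` with `a = b - 1`.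
Put `c = (m / η) ^ a`, `u = c g` and `t = g / m`. For `g ≤ m / 2` the integrand is
`exp (-u) * exp (u (1 - (1 - t) ^ a))`, and expanding the second factor to second order in `t`
leaves a remainder `O(t³ (1 + u³) exp (-u / 2 ^ a))`. Since `t = u / (c m)`, the Gamma integrals of
the three terms of the expansion are the three terms of the theorem, and the remainder integrates
to `O(1 / (c⁴ m³))`. The range `g ≥ m / 2` contributes an exponentially small amount.
-/

lemma abs_exp_sub_sum_le_abs_pow_mul_exp (x : ℝ) (n : ℕ) :
    |exp x - ∑ k ∈ Finset.range n, x ^ k / k.factorial| ≤ |x| ^ n * exp |x| := by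
  have h := Complex.norm_exp_sub_sum_le_norm_mul_exp x n
  norm_cast at h

lemma exists_abs_one_add_rpow_sub_sum_choose_le (a : ℝ) (n : ℕ) {r : ℝ} (hr : r < 1) :
    ∃ K, 0 ≤ K ∧ ∀ x, |x| ≤ r →
      |(1 + x) ^ a - ∑ k ∈ Finset.range n, Ring.choose a k * x ^ k| ≤ K * |x| ^ n := by
  obtain ⟨ρ, hρ, hρ1⟩ := exists_between (max_lt hr one_pos)
  lift ρ to NNReal using (le_max_right r 0).trans hρ.le
  obtain ⟨s, hs, C, hC, hbound⟩ :=
    (Real.one_add_rpow_hasFPowerSeriesOnBall_zero (a := a)).uniform_geometric_approx' (r' := ρ)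
      (by exact_mod_cast hρ1)
  refine ⟨C * (s / ρ) ^ n, by have := hs.1; positivity, fun x hx => ?_⟩
  have hxρ : x ∈ Metric.ball 0 (ρ : ℝ) := by
    simpa using hx.trans_lt ((le_max_left r 0).trans_lt hρ)
  calc |(1 + x) ^ a - ∑ k ∈ Finset.range n, Ring.choose a k * x ^ k|
      ≤ C * (s * (|x| / ρ)) ^ n := by
        simpa [FormalMultilinearSeries.partialSum, binomialSeries, mul_comm] using hbound x hxρ n
    _ = C * (s / ρ) ^ n * |x| ^ n := by ring

lemma ring_choose_two (a : ℝ) : Ring.choose a 2 = a * (a - 1) / 2 := by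
  suffices (2 : ℝ)⁻¹ * (a * (a - 1)) = a * (a - 1) / 2 by
    simpa [Ring.choose_eq_smul, descPochhammer_succ_right, Polynomial.smeval_mul,
      Polynomial.smeval_sub]
  ring

lemma exists_abs_one_sub_rpow_sub_quadratic_le (a : ℝ) {r : ℝ} (hr : r < 1) :
    ∃ K, 0 ≤ K ∧ ∀ t, 0 ≤ t → t ≤ r →
      |1 - (1 - t) ^ a - (a * t + -(a * (a - 1) / 2) * t ^ 2)| ≤ K * t ^ 3 := by
  obtain ⟨K, hK, hbound⟩ := exists_abs_one_add_rpow_sub_sum_choose_le a 3 hr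
  refine ⟨K, hK, fun t ht htr => ?_⟩
  have h := hbound (-t) (by rwa [abs_neg, abs_of_nonneg ht])
  rw [abs_neg, abs_of_nonneg ht, ← abs_neg, ← sub_eq_add_neg] at h
  convert h using 2
  simp only [Finset.sum_range_succ, Finset.sum_range_zero, Ring.choose_zero_right,
    Ring.choose_one_right, ring_choose_two]
  ring

lemma pow_le_one_add_pow {u : ℝ} (hu : 0 ≤ u) {k n : ℕ} (hkn : k ≤ n) : u ^ k ≤ 1 + u ^ n := by
  rcases le_total u 1 with h | h
  · linarith [pow_le_one₀ hu h (n := k), pow_nonneg hu n]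
  · linarith [pow_le_pow_right₀ h hkn]

lemma abs_exp_sub_quadratic_le {s : ℝ} (hs : 0 ≤ s) :
    |exp s - (1 + s + s ^ 2 / 2)| ≤ s ^ 3 * exp s := by
  simpa [Finset.sum_range_succ, abs_of_nonneg hs] using abs_exp_sub_sum_le_abs_pow_mul_exp s 3

lemma abs_sub_linear_le {α β K t q : ℝ} (hK : 0 ≤ K) (ht0 : 0 ≤ t) (ht1 : t ≤ 1)
    (hq : |q - (α * t + β * t ^ 2)| ≤ K * t ^ 3) : |q - α * t| ≤ (|β| + K) * t ^ 2 := by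
  have ht : t ^ 3 ≤ t ^ 2 := pow_le_pow_of_le_one ht0 ht1 (by norm_num)
  calc |q - α * t| = |(q - (α * t + β * t ^ 2)) + β * t ^ 2| := by ring_nf
    _ ≤ K * t ^ 2 + |β| * t ^ 2 := by
      grw [abs_add_le, hq, abs_mul, abs_of_nonneg (sq_nonneg t), ht]
    _ = (|β| + K) * t ^ 2 := by ring

lemma abs_le_mul_of_abs_sub_linear_le {α C t q : ℝ} (hC : 0 ≤ C) (ht0 : 0 ≤ t) (ht1 : t ≤ 1)
    (hq : |q - α * t| ≤ C * t ^ 2) : |q| ≤ (|α| + C) * t := by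
  have ht : t ^ 2 ≤ t := pow_le_of_le_one ht0 ht1 two_ne_zero
  calc |q| = |(q - α * t) + α * t| := by ring_nf
    _ ≤ C * t + |α| * t := by grw [abs_add_le, hq, abs_mul, abs_of_nonneg ht0, ht]
    _ = (|α| + C) * t := by ring

lemma exists_abs_exp_mul_sub_quadratic_le (α β : ℝ) {K : ℝ} (hK : 0 ≤ K) :
    ∃ C, 0 ≤ C ∧ ∀ t q u, 0 ≤ t → t ≤ 1 → 0 ≤ q → 0 ≤ u →
      |q - (α * t + β * t ^ 2)| ≤ K * t ^ 3 →
      |exp (u * q) - (1 + u * α * t + (u ^ 2 * α ^ 2 / 2 + u * β) * t ^ 2)| ≤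
        C * t ^ 3 * (1 + u ^ 3) * exp (u * q) := by
  set L := |β| + K
  have hL : 0 ≤ L := by positivity
  refine ⟨(|α| + L) ^ 3 + K + L * (2 * |α| + L), by positivity,
    fun t q u ht0 ht1 hq0 hu hq => ?_⟩
  have hsub : |q - α * t| ≤ L * t ^ 2 := abs_sub_linear_le hK ht0 ht1 hq
  have habs : |q| ≤ (|α| + L) * t := abs_le_mul_of_abs_sub_linear_le hL ht0 ht1 hsub
  have hadd : |q + α * t| ≤ (2 * |α| + L) * t := by
    grw [abs_add_le, habs, abs_mul, abs_of_nonneg ht0]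
    linarith
  have hu1 : u ≤ 1 + u ^ 3 := by simpa using pow_le_one_add_pow hu (show 1 ≤ 3 by norm_num)
  have hu2 : u ^ 2 / 2 ≤ 1 + u ^ 3 := by
    linarith [pow_le_one_add_pow hu (show 2 ≤ 3 by norm_num), sq_nonneg u]
  have hcubic : |exp (u * q) - (1 + u * q + (u * q) ^ 2 / 2)| ≤
      (|α| + L) ^ 3 * t ^ 3 * (1 + u ^ 3) * exp (u * q) := by
    calc _ ≤ (u * q) ^ 3 * exp (u * q) := abs_exp_sub_quadratic_le (by positivity)
      _ ≤ (u * ((|α| + L) * t)) ^ 3 * exp (u * q) := by grw [le_abs_self q, habs]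
      _ = (|α| + L) ^ 3 * t ^ 3 * u ^ 3 * exp (u * q) := by ring
      _ ≤ _ := by gcongr; linarith
  have hremainder : |u * (q - (α * t + β * t ^ 2))| ≤ K * t ^ 3 * (1 + u ^ 3) := by
    grw [abs_mul, abs_of_nonneg hu, hq, hu1, mul_comm]
  have hsquare : |u ^ 2 / 2 * ((q - α * t) * (q + α * t))| ≤
      L * (2 * |α| + L) * t ^ 3 * (1 + u ^ 3) := by
    grw [abs_mul, abs_mul, abs_of_nonneg (by positivity : 0 ≤ u ^ 2 / 2), hsub, hadd, hu2]
    exact le_of_eq (by ring)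
  have hexp : 1 ≤ exp (u * q) := one_le_exp (by positivity)
  calc _ = |(exp (u * q) - (1 + u * q + (u * q) ^ 2 / 2)) +
          (u * (q - (α * t + β * t ^ 2)) + u ^ 2 / 2 * ((q - α * t) * (q + α * t)))| := by ring_nf
    _ ≤ (|α| + L) ^ 3 * t ^ 3 * (1 + u ^ 3) * exp (u * q) +
          (K * t ^ 3 * (1 + u ^ 3) + L * (2 * |α| + L) * t ^ 3 * (1 + u ^ 3)) * exp (u * q) := by
      grw [abs_add_le, abs_add_le, hcubic, hremainder, hsquare]
      gcongr
      exact le_mul_of_one_le_right (by positivity) hexp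
    _ = _ := by ring

/-- The second-order Taylor polynomial in `t`, at `t = 0`, of `exp (u * (1 - (1 - t) ^ a))`: the
correction to `exp (-u)` in the integrand of `P(M > m)`, where `u = (m / η) ^ a * g` and
`t = g / m`. -/
noncomputable def expTaylorQuadratic (a u t : ℝ) : ℝ :=
  1 + u * a * t + (u ^ 2 * a ^ 2 / 2 + u * -(a * (a - 1) / 2)) * t ^ 2

lemma exists_abs_exp_neg_mul_rpow_sub_le {a : ℝ} (ha : 0 ≤ a) {r : ℝ} (hr : r < 1) :
    ∃ C, ∀ t, 0 ≤ t → t ≤ r → ∀ u, 0 ≤ u →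
      |exp (-(u * (1 - t) ^ a)) - exp (-u) * expTaylorQuadratic a u t| ≤
        C * t ^ 3 * (1 + u ^ 3) * exp (-((1 - r) ^ a * u)) := by
  obtain ⟨K, hK, hrpow⟩ := exists_abs_one_sub_rpow_sub_quadratic_le a hr
  obtain ⟨C, hC, hexp⟩ := exists_abs_exp_mul_sub_quadratic_le a (-(a * (a - 1) / 2)) hK
  refine ⟨C, fun t ht htr u hu => ?_⟩
  set q := 1 - (1 - t) ^ a with hq
  have hq0 : 0 ≤ q := sub_nonneg.2 (rpow_le_one (by linarith) (by linarith) ha)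
  have hfactor : exp (-u) * exp (u * q) = exp (-(u * (1 - t) ^ a)) := by
    rw [← exp_add, hq]
    ring_nf
  have hdecay : exp (-(u * (1 - t) ^ a)) ≤ exp (-((1 - r) ^ a * u)) := by
    rw [mul_comm u]
    gcongr
  calc |exp (-(u * (1 - t) ^ a)) - exp (-u) * expTaylorQuadratic a u t|
      = exp (-u) * |exp (u * q) - expTaylorQuadratic a u t| := by
        rw [← hfactor, ← mul_sub, abs_mul, abs_exp]
    _ ≤ exp (-u) * (C * t ^ 3 * (1 + u ^ 3) * exp (u * q)) := by
        gcongr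
        exact hexp t q u ht (htr.trans hr.le) hq0 hu (hrpow t ht htr)
    _ = C * t ^ 3 * (1 + u ^ 3) * exp (-(u * (1 - t) ^ a)) := by rw [← hfactor]; ring
    _ ≤ C * t ^ 3 * (1 + u ^ 3) * exp (-((1 - r) ^ a * u)) := by gcongr

lemma exists_abs_expTaylorQuadratic_le (a : ℝ) {r : ℝ} (hr : 0 < r) :
    ∃ C, 0 ≤ C ∧ ∀ t, r ≤ t → ∀ u, 0 ≤ u →
      |expTaylorQuadratic a u t| ≤ C * t ^ 3 * (1 + u ^ 3) := by
  refine ⟨1 / r ^ 3 + |a| / r ^ 2 + (a ^ 2 / 2 + |a * (a - 1) / 2|) / r, by positivity,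
    fun t ht u hu => ?_⟩
  have ht0 : 0 < t := hr.trans_le ht
  have hpow : ∀ k ≤ 3, t ^ k ≤ t ^ 3 / r ^ (3 - k) := fun k hk => by
    rw [le_div_iff₀ (by positivity)]
    calc t ^ k * r ^ (3 - k) ≤ t ^ k * t ^ (3 - k) := by gcongr
      _ = t ^ 3 := by rw [← pow_add, Nat.add_sub_cancel' hk]
  have ht_zero : 1 ≤ t ^ 3 / r ^ 3 := by simpa using hpow 0 (by norm_num)
  have ht_one : t ≤ t ^ 3 / r ^ 2 := by simpa using hpow 1 (by norm_num)
  have ht_two : t ^ 2 ≤ t ^ 3 / r := by simpa using hpow 2 (by norm_num)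
  have hu_zero : 1 ≤ 1 + u ^ 3 := by simpa using pow_nonneg hu 3
  have hu_one : u ≤ 1 + u ^ 3 := by simpa using pow_le_one_add_pow hu (show 1 ≤ 3 by norm_num)
  have hu_two : u ^ 2 ≤ 1 + u ^ 3 := pow_le_one_add_pow hu (by norm_num)
  calc |expTaylorQuadratic a u t|
      ≤ 1 * 1 + u * |a| * t + (u ^ 2 * a ^ 2 / 2 + u * |a * (a - 1) / 2|) * t ^ 2 := by
        rw [expTaylorQuadratic]
        grw [abs_add_le, abs_add_le, abs_mul _ (t ^ 2), abs_add_le]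
        simp only [abs_mul, abs_neg, abs_one, abs_of_nonneg hu, abs_of_pos ht0, abs_pow, abs_div,
          sq_abs, abs_two, one_mul, le_refl]
    _ ≤ (1 + u ^ 3) * (t ^ 3 / r ^ 3) + (1 + u ^ 3) * |a| * (t ^ 3 / r ^ 2) +
          ((1 + u ^ 3) * a ^ 2 / 2 + (1 + u ^ 3) * |a * (a - 1) / 2|) * (t ^ 3 / r) := by
        gcongr
    _ = _ := by ring

lemma integrableOn_pow_mul_exp_neg_mul_Ioi (n : ℕ) {r : ℝ} (hr : 0 < r) :
    IntegrableOn (fun x : ℝ => x ^ n * exp (-(r * x))) (Set.Ioi 0) := by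
  have hn : (-1 : ℝ) < n := by linarith [n.cast_nonneg (α := ℝ)]
  simpa using integrableOn_rpow_mul_exp_neg_mul_rpow hn one_pos hr

lemma integral_pow_mul_exp_neg_mul_Ioi (n : ℕ) {r : ℝ} (hr : 0 < r) :
    ∫ x in Set.Ioi (0 : ℝ), x ^ n * exp (-(r * x)) = n.factorial / r ^ (n + 1) := by
  have h := Real.integral_rpow_mul_exp_neg_mul_Ioi (a := n + 1) (by positivity) hr
  simp only [add_sub_cancel_right, rpow_natCast, Real.Gamma_nat_eq_factorial] at h
  rw [h, ← Nat.cast_succ, rpow_natCast, one_div, inv_pow, div_eq_inv_mul]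

lemma integrableOn_exp_neg_mul_Ioi {r : ℝ} (hr : 0 < r) :
    IntegrableOn (fun x : ℝ => exp (-(r * x))) (Set.Ioi 0) := by
  simpa using integrableOn_pow_mul_exp_neg_mul_Ioi 0 hr

lemma integral_exp_neg_mul_Ioi {r : ℝ} (hr : 0 < r) :
    ∫ x in Set.Ioi (0 : ℝ), exp (-(r * x)) = 1 / r := by
  simpa using integral_pow_mul_exp_neg_mul_Ioi 0 hr

lemma integrableOn_sum_pow_mul_exp_neg_mul_Ioi {n : ℕ} (w : Fin n → ℝ) {r : ℝ} (hr : 0 < r) :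
    IntegrableOn (fun x : ℝ => ∑ k, w k * (x ^ (k : ℕ) * exp (-(r * x)))) (Set.Ioi 0) :=
  integrable_finsetSum _ fun k _ => (integrableOn_pow_mul_exp_neg_mul_Ioi k hr).const_mul (w k)

lemma integral_sum_pow_mul_exp_neg_mul_Ioi {n : ℕ} (w : Fin n → ℝ) {r : ℝ} (hr : 0 < r) :
    ∫ x in Set.Ioi (0 : ℝ), ∑ k, w k * (x ^ (k : ℕ) * exp (-(r * x))) =
      ∑ k, w k * ((k : ℕ).factorial / r ^ ((k : ℕ) + 1)) := by
  rw [integral_finsetSum _ fun (k : Fin n) _ =>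
    (integrableOn_pow_mul_exp_neg_mul_Ioi k hr).const_mul (w k)]
  simp only [integral_const_mul, integral_pow_mul_exp_neg_mul_Ioi _ hr]

lemma exp_neg_mul_expTaylorQuadratic_eq_sum (a c m g : ℝ) :
    exp (-(c * g)) * expTaylorQuadratic a (c * g) (g / m) =
      ∑ k, ![1, 0, a * c / m, -(a * (a - 1) / 2 * c / m ^ 2), a ^ 2 * c ^ 2 / (2 * m ^ 2)] k *
        (g ^ (k : ℕ) * exp (-(c * g))) := by
  rw [expTaylorQuadratic]
  simp only [Fin.sum_univ_five, Matrix.cons_val, Fin.coe_ofNat_eq_mod]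
  ring

lemma integrableOn_exp_neg_mul_expTaylorQuadratic (a m : ℝ) {c : ℝ} (hc : 0 < c) :
    IntegrableOn (fun g => exp (-(c * g)) * expTaylorQuadratic a (c * g) (g / m)) (Set.Ioi 0) := by
  simp only [exp_neg_mul_expTaylorQuadratic_eq_sum]
  exact integrableOn_sum_pow_mul_exp_neg_mul_Ioi _ hc

lemma integral_exp_neg_mul_expTaylorQuadratic (a m : ℝ) {c : ℝ} (hc : 0 < c) :
    ∫ g in Set.Ioi 0, exp (-(c * g)) * expTaylorQuadratic a (c * g) (g / m) =
      1 / c + 2 * a / (c ^ 2 * m) + 3 * a * (3 * a + 1) / (c ^ 3 * m ^ 2) := by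
  simp only [exp_neg_mul_expTaylorQuadratic_eq_sum]
  rw [integral_sum_pow_mul_exp_neg_mul_Ioi _ hc]
  simp only [Fin.sum_univ_five, Matrix.cons_val, Fin.coe_ofNat_eq_mod, Nat.factorial]
  push_cast
  field_simp
  ring

/-- A bound for the error of replacing `jointTail` by its Taylor approximation. The first summand is
the Taylor remainder, with `c = (m / η) ^ a` and `κ = (1 / 2) ^ a`. The second covers `m / 2 ≤ g`,
where the approximation is not close but `exp (-g) ≤ exp (-m / 4) * exp (-g / 2)`. -/
noncomputable def tailErrorBound (C κ c m g : ℝ) : ℝ :=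
  C * (g / m) ^ 3 * (1 + (c * g) ^ 3) * exp (-(κ * (c * g))) +
    exp (-(1 / 4 * m)) * exp (-(1 / 2 * g))

lemma tailErrorBound_eq_sum_add (C κ c m g : ℝ) :
    tailErrorBound C κ c m g =
      ∑ k, ![0, 0, 0, C / m ^ 3, 0, 0, C * c ^ 3 / m ^ 3] k *
        (g ^ (k : ℕ) * exp (-(κ * c * g))) + exp (-(1 / 4 * m)) * exp (-(1 / 2 * g)) := by
  rw [tailErrorBound, mul_assoc κ c g]
  simp only [Fin.sum_univ_seven, Matrix.cons_val, Fin.coe_ofNat_eq_mod]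
  ring

lemma integrableOn_tailErrorBound (C m : ℝ) {κ c : ℝ} (hκ : 0 < κ) (hc : 0 < c) :
    IntegrableOn (tailErrorBound C κ c m) (Set.Ioi 0) := by
  rw [funext (tailErrorBound_eq_sum_add C κ c m)]
  exact (integrableOn_sum_pow_mul_exp_neg_mul_Ioi _ (mul_pos hκ hc)).add
    (integrableOn_exp_neg_mul_Ioi one_half_pos |>.const_mul _)

lemma integral_tailErrorBound (C m : ℝ) {κ c : ℝ} (hκ : 0 < κ) (hc : 0 < c) :
    ∫ g in Set.Ioi 0, tailErrorBound C κ c m g =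
      C * (6 / κ ^ 4 + 720 / κ ^ 7) / (c ^ 4 * m ^ 3) + 2 * exp (-(1 / 4 * m)) := by
  simp only [tailErrorBound_eq_sum_add]
  rw [integral_add (integrableOn_sum_pow_mul_exp_neg_mul_Ioi _ (mul_pos hκ hc))
      (integrableOn_exp_neg_mul_Ioi one_half_pos |>.const_mul _),
    integral_sum_pow_mul_exp_neg_mul_Ioi _ (mul_pos hκ hc), integral_const_mul,
    integral_exp_neg_mul_Ioi one_half_pos]
  simp only [Fin.sum_univ_seven, Matrix.cons_val, Fin.coe_ofNat_eq_mod, Nat.factorial]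
  push_cast
  field_simp
  ring

/-- The density `exp (-g)` of `G` at `g` times `P(ξ > m - g | G = g)`, where `a = b - 1`. The
maximum accounts for `ξ > η`, so that one formula serves for `g ≤ m - η` and `m - η ≤ g`. -/
noncomputable def jointTail (η a m g : ℝ) : ℝ :=
  exp (-(g * (max η (m - g) / η) ^ a))

lemma jointTail_pos (η a m g : ℝ) : 0 < jointTail η a m g := exp_pos _

lemma continuous_jointTail (η m : ℝ) {a : ℝ} (ha : 0 ≤ a) : Continuous (jointTail η a m) := by
  have : Continuous fun g : ℝ => (max η (m - g) / η) ^ a :=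
    Continuous.rpow_const (by fun_prop) fun _ => Or.inr ha
  unfold jointTail
  fun_prop

lemma jointTail_le_exp_neg {η a g : ℝ} (m : ℝ) (hη : 0 < η) (ha : 0 ≤ a) (hg : 0 ≤ g) :
    jointTail η a m g ≤ exp (-g) := by
  have hone : 1 ≤ (max η (m - g) / η) ^ a :=
    one_le_rpow ((one_le_div hη).2 (le_max_left _ _)) ha
  exact exp_le_exp.2 (neg_le_neg (le_mul_of_one_le_right hg hone))

lemma integrableOn_jointTail {η a : ℝ} (m : ℝ) (hη : 0 < η) (ha : 0 ≤ a) :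
    IntegrableOn (jointTail η a m) (Set.Ioi 0) := by
  refine (integrableOn_exp_neg_Ioi 0).mono' (continuous_jointTail η m ha).aestronglyMeasurable
    ((ae_restrict_iff' measurableSet_Ioi).2 (ae_of_all _ fun g hg => ?_))
  rw [norm_of_nonneg (jointTail_pos ..).le]
  exact jointTail_le_exp_neg m hη ha (Set.mem_Ioi.1 hg).le

lemma jointTail_eq_exp_neg_mul_rpow {η m g : ℝ} (a : ℝ) (hη : 0 < η) (hm : 0 < m)
    (hgm : g ≤ m - η) :
    jointTail η a m g = exp (-((m / η) ^ a * g * (1 - g / m) ^ a)) := by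
  have hg : 0 ≤ 1 - g / m := sub_nonneg.2 ((div_le_one hm).2 (by linarith))
  rw [jointTail, max_eq_right (by linarith), show (m - g) / η = m / η * (1 - g / m) by field_simp,
    mul_rpow (by positivity) hg]
  ring_nf

lemma exists_abs_jointTail_sub_le {a : ℝ} (ha : 0 ≤ a) :
    ∃ C, ∀ η m g, 0 < η → 2 * η ≤ m → 0 ≤ g →
      |jointTail η a m g -
          exp (-((m / η) ^ a * g)) * expTaylorQuadratic a ((m / η) ^ a * g) (g / m)| ≤
        tailErrorBound C ((1 / 2) ^ a) ((m / η) ^ a) m g := by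
  obtain ⟨C₁, hsmall⟩ := exists_abs_exp_neg_mul_rpow_sub_le ha one_half_lt_one
  obtain ⟨C₂, hC₂, hlarge⟩ := exists_abs_expTaylorQuadratic_le a one_half_pos
  refine ⟨max C₁ C₂, fun η m g hη hm hg => ?_⟩
  have hm0 : 0 < m := by linarith
  set c := (m / η) ^ a
  have : 0 < c := by positivity
  rcases le_total g (m / 2) with hgm | hgm
  · have hgm' : g / m ≤ 1 / 2 := by rw [div_le_iff₀ hm0]; linarith
    have h := hsmall (g / m) (by positivity) hgm' (c * g) (by positivity)
    rw [sub_half] at h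
    rw [jointTail_eq_exp_neg_mul_rpow a hη hm0 (by linarith), tailErrorBound]
    grw [h, ← le_max_left C₁ C₂]
    exact le_add_of_nonneg_right (by positivity)
  · have hgm' : 1 / 2 ≤ g / m := by rw [le_div_iff₀ hm0]; linarith
    have htail : jointTail η a m g ≤ exp (-(1 / 4 * m)) * exp (-(1 / 2 * g)) := by
      refine (jointTail_le_exp_neg m hη ha hg).trans ?_
      rw [← exp_add, exp_le_exp]
      linarith
    have hdecay : exp (-(c * g)) ≤ exp (-((1 / 2) ^ a * (c * g))) := by
      refine exp_le_exp.2 (neg_le_neg (mul_le_of_le_one_left (by positivity) ?_))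
      exact rpow_le_one (by norm_num) (by norm_num) ha
    rw [tailErrorBound, add_comm]
    grw [abs_sub, abs_mul, abs_exp, hlarge _ hgm' _ (by positivity), hdecay, ← le_max_right C₁ C₂,
      ← htail]
    rw [mul_comm (exp _), abs_of_pos (jointTail_pos ..)]

lemma exists_abs_integral_jointTail_sub_le {a : ℝ} (ha : 0 ≤ a) :
    ∃ K, ∀ η m, 0 < η → 2 * η ≤ m →
      |(∫ g in Set.Ioi 0, jointTail η a m g) -
          (1 / (m / η) ^ a + 2 * a / (((m / η) ^ a) ^ 2 * m) +
            3 * a * (3 * a + 1) / (((m / η) ^ a) ^ 3 * m ^ 2))| ≤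
        K / (((m / η) ^ a) ^ 4 * m ^ 3) + 2 * exp (-(1 / 4 * m)) := by
  obtain ⟨C, hbound⟩ := exists_abs_jointTail_sub_le ha
  refine ⟨C * (6 / ((1 / 2) ^ a) ^ 4 + 720 / ((1 / 2) ^ a) ^ 7), fun η m hη hm => ?_⟩
  have hm0 : 0 < m := by linarith
  have hc : 0 < (m / η) ^ a := by positivity
  have hκ : (0 : ℝ) < (1 / 2) ^ a := by positivity
  rw [← integral_exp_neg_mul_expTaylorQuadratic a m hc, ← integral_tailErrorBound C m hκ hc,
    ← integral_sub (integrableOn_jointTail m hη ha)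
      (integrableOn_exp_neg_mul_expTaylorQuadratic a m hc), ← norm_eq_abs]
  refine norm_integral_le_of_norm_le (integrableOn_tailErrorBound C m hκ hc)
    ((ae_restrict_iff' measurableSet_Ioi).2 (ae_of_all _ fun g hg => ?_))
  exact hbound η m g hη hm (Set.mem_Ioi.1 hg).le

lemma one_div_div_rpow_pow_mul_pow {η m : ℝ} (hη : 0 < η) (hm : 0 < m) (a : ℝ) (k j : ℕ) :
    1 / (((m / η) ^ a) ^ k * m ^ j) = η ^ (k * a) / m ^ (k * a + j) := by
  rw [rpow_add hm, rpow_natCast, mul_comm (k : ℝ) a, rpow_mul_natCast hη.le,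
    rpow_mul_natCast hm.le, div_rpow hm.le hη.le, div_pow, div_mul_eq_mul_div, one_div_div]

lemma integral_jointTail_sub_isBigO {η b : ℝ} (hη : 0 < η) (hb : 1 ≤ b) :
    (fun m => (∫ g in Set.Ioi 0, jointTail η (b - 1) m g) -
        (η ^ (b - 1) / m ^ (b - 1) + 2 * (b - 1) * η ^ (2 * b - 2) / m ^ (2 * b - 1) +
          3 * (b - 1) * (3 * b - 2) * η ^ (3 * b - 3) / m ^ (3 * b - 1)))
      =O[atTop] fun m => m ^ (-(4 * b - 1)) := by
  obtain ⟨K, hK⟩ := exists_abs_integral_jointTail_sub_le (sub_nonneg.2 hb)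
  have herror : (fun m => K * η ^ (4 * (b - 1)) * m ^ (-(4 * b - 1)) + 2 * exp (-(1 / 4) * m))
      =O[atTop] fun m => m ^ (-(4 * b - 1)) :=
    ((isBigO_refl _ _).const_mul_left _).add
      ((isLittleO_exp_neg_mul_rpow_atTop (by norm_num) _).isBigO.const_mul_left 2)
  refine IsBigO.trans (IsBigO.of_bound' ?_) herror
  filter_upwards [eventually_ge_atTop (2 * η)] with m hm
  have hm0 : 0 < m := by linarith
  have hterm := one_div_div_rpow_pow_mul_pow hη hm0 (b - 1)
  have hfirst : 1 / (m / η) ^ (b - 1) = η ^ (b - 1) / m ^ (b - 1) := by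
    simpa using hterm 1 0
  have hsecond : 1 / (((m / η) ^ (b - 1)) ^ 2 * m) = η ^ (2 * b - 2) / m ^ (2 * b - 1) := by
    convert hterm 2 1 using 3 <;> push_cast <;> ring
  have hthird : 1 / (((m / η) ^ (b - 1)) ^ 3 * m ^ 2) = η ^ (3 * b - 3) / m ^ (3 * b - 1) := by
    convert hterm 3 2 using 3 <;> push_cast <;> ring
  have hfourth : 1 / (((m / η) ^ (b - 1)) ^ 4 * m ^ 3) =
      η ^ (4 * (b - 1)) * m ^ (-(4 * b - 1)) := by
    rw [rpow_neg hm0.le, ← div_eq_mul_inv]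
    convert hterm 4 3 using 3 <;> push_cast <;> ring
  refine le_trans (le_of_eq ?_) ((hK η m hη hm).trans ((le_of_eq ?_).trans (le_abs_self _)))
  · rw [norm_eq_abs, hfirst, div_eq_mul_one_div _ (_ * m), hsecond,
      div_eq_mul_one_div _ (_ * m ^ 2), hthird]
    ring_nf
  · rw [div_eq_mul_one_div, hfourth]
    ring_nf

lemma isLittleO_div_rpow_atTop {p q A : ℝ} (hpq : p < q) (hA : A ≠ 0) (B : ℝ) :
    (fun x => B / x ^ q) =o[atTop] fun x => A / x ^ p := by
  refine (isLittleO_iff_tendsto' ?_).2 ?_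
  · filter_upwards [eventually_gt_atTop 0] with x hx h
    exact absurd h (div_ne_zero hA (rpow_pos_of_pos hx p).ne')
  · have hlim := (tendsto_rpow_neg_atTop (sub_pos.2 hpq)).const_mul (B / A)
    rw [mul_zero] at hlim
    refine hlim.congr' ?_
    filter_upwards [eventually_gt_atTop 0] with x hx
    have := rpow_pos_of_pos hx
    rw [neg_sub, rpow_sub hx]
    field_simp

lemma isEquivalent_of_sub_expansion_isBigO {f : ℝ → ℝ} {A B C p q r s : ℝ} (hA : A ≠ 0)
    (hpq : p < q) (hpr : p < r) (hps : p < s)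
    (hf : (fun x => f x - (A / x ^ p + B / x ^ q + C / x ^ r)) =O[atTop] fun x => x ^ (-s)) :
    f ~[atTop] fun x => A / x ^ p := by
  have hs : (fun x : ℝ => x ^ (-s)) =o[atTop] fun x => A / x ^ p := by
    refine (isLittleO_div_rpow_atTop hps hA 1).congr' ?_ EventuallyEq.rfl
    filter_upwards [eventually_gt_atTop 0] with x hx
    rw [rpow_neg hx.le, one_div]
  refine (((hf.trans_isLittleO hs).add (isLittleO_div_rpow_atTop hpq hA B)).add
    (isLittleO_div_rpow_atTop hpr hA C)).congr_left fun x => ?_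
  simp only [Pi.sub_apply]
  ring

lemma withDensity_setOf_lt_add {f : ℝ × ℝ → ENNReal} (hf : Measurable f) (m : ℝ) :
    (volume : Measure (ℝ × ℝ)).withDensity f {p | m < p.1 + p.2} =
      ∫⁻ g, ∫⁻ x in Set.Ioi (m - g), f (g, x) := by
  have hS : MeasurableSet {p : ℝ × ℝ | m < p.1 + p.2} :=
    measurableSet_lt measurable_const (by fun_prop)
  rw [withDensity_apply _ hS, ← lintegral_indicator hS, Measure.volume_eq_prod,
    lintegral_prod _ (hf.indicator hS).aemeasurable]
  refine lintegral_congr fun g => ?_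
  rw [← lintegral_indicator measurableSet_Ioi]
  refine lintegral_congr fun x => ?_
  simp only [Set.indicator, Set.mem_ofPred_eq, Set.mem_Ioi, sub_lt_iff_lt_add']

/-- The joint density of `(G, ξ)`, where `G` is exponential of rate one and `ξ` has the heavy-tailed
conditional density given `G`. -/
noncomputable def pairDensity (η b : ℝ) (p : ℝ × ℝ) : ℝ :=
  if 0 < p.1 ∧ η < p.2 then
    Real.exp (-p.1) *
      (p.1 * Real.exp (-p.1 * ((p.2 / η) ^ (b - 1) - 1)) *
        p.2 ^ (b - 2) / η ^ (b - 1) * (b - 1))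
  else 0

lemma measurable_pairDensity (η b : ℝ) : Measurable (pairDensity η b) := by
  refine Measurable.ite ?_ (by fun_prop) measurable_const
  exact (measurableSet_lt measurable_const measurable_fst).inter
    (measurableSet_lt measurable_const measurable_snd)

lemma pairDensity_nonneg {η b : ℝ} (hη : 0 ≤ η) (hb : 1 ≤ b) (p : ℝ × ℝ) :
    0 ≤ pairDensity η b p := by
  rw [pairDensity]
  split_ifs with hp
  · have hg : 0 ≤ p.1 := hp.1.le
    have hx : 0 ≤ p.2 := hη.trans hp.2.le
    refine mul_nonneg (exp_pos _).le (mul_nonneg ?_ (sub_nonneg.2 hb))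
    positivity
  · rfl

lemma hasDerivAt_neg_exp_neg_mul_div_rpow {η x : ℝ} (hη : 0 < η) (hx : 0 < x) (b g : ℝ) :
    HasDerivAt (fun x => -exp (-(g * (x / η) ^ (b - 1))))
      (exp (-g) * (g * exp (-g * ((x / η) ^ (b - 1) - 1)) * x ^ (b - 2) / η ^ (b - 1) * (b - 1)))
      x := by
  have hpow : HasDerivAt (fun x => (x / η) ^ (b - 1))
      (1 / η * (b - 1) * (x / η) ^ (b - 1 - 1)) x :=
    ((hasDerivAt_id x).div_const η).rpow_const (Or.inl (div_pos hx hη).ne')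
  refine (hpow.const_mul g).fun_neg.exp.fun_neg.congr_deriv ?_
  have hexp : exp (-(g * (x / η) ^ (b - 1))) = exp (-g) * exp (-g * ((x / η) ^ (b - 1) - 1)) := by
    rw [← exp_add]
    ring_nf
  have hscale : 1 / η * (x / η) ^ (b - 1 - 1) = x ^ (b - 2) / η ^ (b - 1) := by
    rw [show b - 1 - 1 = b - 2 by ring, show b - 1 = b - 2 + 1 by ring, div_rpow hx.le hη.le,
      rpow_add_one hη.ne']
    field_simp
  rw [hexp]
  linear_combination
    exp (-g) * exp (-g * ((x / η) ^ (b - 1) - 1)) * g * (b - 1) * hscale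

lemma tendsto_neg_exp_neg_mul_div_rpow_atTop {η a g : ℝ} (hη : 0 < η) (ha : 0 < a) (hg : 0 < g) :
    Tendsto (fun x => -exp (-(g * (x / η) ^ a))) atTop (nhds 0) := by
  rw [← neg_zero]
  exact (tendsto_exp_neg_atTop_nhds_zero.comp (((tendsto_rpow_atTop ha).comp
    (tendsto_id.atTop_div_const hη)).const_mul_atTop hg)).neg

lemma lintegral_Ioi_of_hasDerivAt_of_nonneg {f f' : ℝ → ℝ} {y l : ℝ}
    (hderiv : ∀ x ∈ Set.Ici y, HasDerivAt f (f' x) x) (hnonneg : ∀ x ∈ Set.Ioi y, 0 ≤ f' x)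
    (hlim : Tendsto f atTop (nhds l)) :
    ∫⁻ x in Set.Ioi y, ENNReal.ofReal (f' x) = ENNReal.ofReal (l - f y) := by
  rw [← ofReal_integral_eq_lintegral_ofReal (integrableOn_Ioi_deriv_of_nonneg' hderiv hnonneg hlim)
    ((ae_restrict_iff' measurableSet_Ioi).2 (ae_of_all _ hnonneg)),
    integral_Ioi_of_hasDerivAt_of_nonneg' hderiv hnonneg hlim]

lemma lintegral_Ioi_pairDensity_of_le {η b g y : ℝ} (hη : 0 < η) (hb : 1 < b) (hg : 0 < g)
    (hy : η ≤ y) :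
    ∫⁻ x in Set.Ioi y, ENNReal.ofReal (pairDensity η b (g, x)) =
      ENNReal.ofReal (exp (-(g * (y / η) ^ (b - 1)))) := by
  have hdensity : ∀ x ∈ Set.Ioi y, pairDensity η b (g, x) = exp (-g) *
      (g * exp (-g * ((x / η) ^ (b - 1) - 1)) * x ^ (b - 2) / η ^ (b - 1) * (b - 1)) :=
    fun x hx => if_pos ⟨hg, hy.trans_lt hx⟩
  rw [setLIntegral_congr_fun measurableSet_Ioi fun x hx => congrArg ENNReal.ofReal (hdensity x hx),
    lintegral_Ioi_of_hasDerivAt_of_nonneg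
      (fun x hx => hasDerivAt_neg_exp_neg_mul_div_rpow hη (hη.trans_le (hy.trans hx)) b g)
      (fun x hx => hdensity x hx ▸ pairDensity_nonneg hη.le hb.le (g, x))
      (tendsto_neg_exp_neg_mul_div_rpow_atTop hη (sub_pos.2 hb) hg),
    zero_sub, neg_neg]

lemma lintegral_Ioi_pairDensity {η b : ℝ} (hη : 0 < η) (hb : 1 < b) (m g : ℝ) :
    ∫⁻ x in Set.Ioi (m - g), ENNReal.ofReal (pairDensity η b (g, x)) =
      (Set.Ioi 0).indicator (fun g => ENNReal.ofReal (jointTail η (b - 1) m g)) g := by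
  by_cases hg : 0 < g
  · rw [Set.indicator_of_mem (Set.mem_Ioi.2 hg), jointTail,
      ← lintegral_Ioi_pairDensity_of_le hη hb hg (le_max_left _ _),
      ← lintegral_indicator measurableSet_Ioi, ← lintegral_indicator measurableSet_Ioi]
    refine lintegral_congr fun x => ?_
    by_cases hx : η < x <;> simp [Set.indicator, pairDensity, hx]
  · simp [pairDensity, hg]

lemma toReal_withDensity_pairDensity_setOf_lt_add {η b : ℝ} (hη : 0 < η) (hb : 1 < b) (m : ℝ) :
    ((volume : Measure (ℝ × ℝ)).withDensity (fun p => ENNReal.ofReal (pairDensity η b p))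
        {p | m < p.1 + p.2}).toReal =
      ∫ g in Set.Ioi 0, jointTail η (b - 1) m g := by
  rw [withDensity_setOf_lt_add (measurable_pairDensity η b).ennreal_ofReal,
    lintegral_congr (lintegral_Ioi_pairDensity hη hb m), lintegral_indicator measurableSet_Ioi,
    integral_eq_lintegral_of_nonneg_ae (ae_of_all _ fun g => (jointTail_pos ..).le)
      (continuous_jointTail η m (sub_pos.2 hb).le).aestronglyMeasurable]

/-- Exponential goal, heavy-tailed discrepancy: if `G ~ Exp(1)` and, given `G = g`,
`ξ` has density `g·exp(-g((x/η)^{b-1}-1))·(x^{b-2}/η^{b-1})·(b-1)·1[x>η]`, then for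
`M = G + ξ`, `P(M > m) ~ η^{b-1}/m^{b-1}` as `m → ∞`, and more precisely
`P(M>m) = η^{b-1}/m^{b-1} + 2(b-1)η^{2b-2}/m^{2b-1} + 3(b-1)(3b-2)η^{3b-3}/m^{3b-1}
  + O(m^{-(4b-1)})`. -/
theorem exp_heavy_tail_prob {Ω : Type*} [MeasureSpace Ω] [IsProbabilityMeasure (ℙ : Measure Ω)]
    (G ξ : Ω → ℝ) (hG : Measurable G) (hξ : Measurable ξ) (η b : ℝ) (hη : 0 < η)
    (hlaw : Measure.map (fun ω => (G ω, ξ ω)) ℙ =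
      (volume : Measure (ℝ × ℝ)).withDensity (fun p =>
        ENNReal.ofReal (if 0 < p.1 ∧ η < p.2 then
          Real.exp (-p.1) *
            (p.1 * Real.exp (-p.1 * ((p.2 / η) ^ (b - 1) - 1)) *
              p.2 ^ (b - 2) / η ^ (b - 1) * (b - 1))
        else 0))) (hb : 1 < b) :
    ((fun m : ℝ => (ℙ {ω | m < G ω + ξ ω}).toReal)
        ~[atTop] (fun m : ℝ => η ^ (b - 1) / m ^ (b - 1))) ∧
    (fun m : ℝ => (ℙ {ω | m < G ω + ξ ω}).toReal -
        (η ^ (b - 1) / m ^ (b - 1)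
          + 2 * (b - 1) * η ^ (2 * b - 2) / m ^ (2 * b - 1)
          + 3 * (b - 1) * (3 * b - 2) * η ^ (3 * b - 3) / m ^ (3 * b - 1)))
      =O[atTop] (fun m : ℝ => m ^ (-(4 * b - 1))) := by
  have htail (m : ℝ) : (ℙ {ω | m < G ω + ξ ω}).toReal =
      ∫ g in Set.Ioi 0, jointTail η (b - 1) m g := by
    have hS : MeasurableSet {p : ℝ × ℝ | m < p.1 + p.2} :=
      measurableSet_lt measurable_const (by fun_prop)
    rw [← toReal_withDensity_pairDensity_setOf_lt_add hη hb]
    simp only [pairDensity]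
    rw [← hlaw, Measure.map_apply (hG.prodMk hξ) hS]
    rfl
  simp only [htail]
  have hexpansion := integral_jointTail_sub_isBigO hη hb.le
  exact ⟨isEquivalent_of_sub_expansion_isBigO (rpow_pos_of_pos hη _).ne' (by linarith)
    (by linarith) (by linarith) hexpansion, hexpansion⟩
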